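/- For every integer radius r ≥ 1, let A(r) = 2 · Σ_{n=0}^{2r−1} 1/a_n be the arithmetic mean and H(r) = 8r² / ( Σ_{n=0}^{2r−1} a_n ) the harmonic mean of the values π_n = 4r/a_n along the signum circle path of radius r, where a_n = x_n + y_n. Then the sequence A(r)·H(r) + 2·H(r) − 16 converges to 0 as r → ∞. -/

import Mathlib

/-!
Rationalising the difference of square roots in `sStep` shows that the step is `+1` exactly when
`(aₙ, cₙ)` lies in the ellipse with foci `(±1, 0)` and semi-major axis `√2 r`, which is within
`O(1 / r)` of the disc of radius `√2 r`. Hence `(aₙ, cₙ)` follows that circle at bounded distance,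
and `aₙ / r = √(2 - tₙ²) + O(1 / r)` with `tₙ = cₙ / r`.

The expression in the theorem equals `-16 (r² / ∑ aₙ) (∑ aₙ / r² - ∑ 1 / aₙ - 1)`. The factor
`r² / ∑ aₙ` is bounded because `∑ aₙ ≥ r²`, while `∑ aₙ / r² - ∑ 1 / aₙ` is asymptotically a Riemann
sum over `[-1, 1]` of `√(2 - t²) - 1 / √(2 - t²)`, the derivative of `t √(2 - t²) / 2`, so it tends
to `1`.
-/

open Filter Finset Real

/-- The signum function of the paper: `-1` if `t ≤ 0` and `1` if `t > 0`. -/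
noncomputable def sgn (t : ℝ) : ℝ := if t ≤ 0 then -1 else 1

/-- The signum term `sₙ` determining the step of the path, computed from the
current position `(x, y)`, with `a = x + y` and `c = r - n - 1`. -/
noncomputable def sStep (r n : ℕ) (x y : ℝ) : ℝ :=
  -sgn ((x + y) + (r : ℝ) / Real.sqrt 2 *
    (Real.sqrt (((x + y) - 1) ^ 2 + ((r : ℝ) - n - 1) ^ 2) -
     Real.sqrt (((x + y) + 1) ^ 2 + ((r : ℝ) - n - 1) ^ 2)))

/-- The signum circle path of radius `r`: `x₀ = r`, `y₀ = 0`,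
`xₙ₊₁ = xₙ + sₙ/2 - 1/2`, `yₙ₊₁ = yₙ + sₙ/2 + 1/2`. -/
noncomputable def circlePath (r : ℕ) : ℕ → ℝ × ℝ
  | 0 => ((r : ℝ), 0)
  | n + 1 =>
    let p := circlePath r n
    let s := sStep r n p.1 p.2
    (p.1 + s / 2 - 1 / 2, p.2 + s / 2 + 1 / 2)

/-- The signum term `sₙ` along the signum circle path of radius `r`. -/
noncomputable def sTerm (r n : ℕ) : ℝ := sStep r n (circlePath r n).1 (circlePath r n).2

lemma tendsto_trapezoidal_integral {f : ℝ → ℝ} {a b : ℝ} (hf : ContDiffOn ℝ 2 f (Set.uIcc a b)) :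
    Tendsto (fun N : ℕ => trapezoidal_integral f N a b) atTop (nhds (∫ x in a..b, f x)) := by
  rcases eq_or_ne a b with rfl | hab
  · simp
  obtain ⟨C, hC⟩ := isCompact_uIcc.exists_bound_of_continuousOn
    (hf.continuousOn_iteratedDerivWithin le_rfl (uniqueDiffOn_uIcc hab))
  have hbound (x : ℝ) : |iteratedDerivWithin 2 f (Set.uIcc a b) x| ≤ C := by
    by_cases hx : x ∈ Set.uIcc a b
    · exact hC x hx
    · rw [iteratedDerivWithin_succ, derivWithin_zero_of_notMem_closure
        (by rwa [isCompact_uIcc.isClosed.closure_eq]), abs_zero]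
      exact (norm_nonneg _).trans (hC a Set.left_mem_uIcc)
  have hrate : Tendsto (fun N : ℕ => |b - a| ^ 3 * C / 12 * ((N : ℝ)⁻¹) ^ 2) atTop (nhds 0) := by
    simpa using (tendsto_inv_atTop_nhds_zero_nat (𝕜 := ℝ)).pow 2 |>.const_mul (|b - a| ^ 3 * C / 12)
  refine tendsto_iff_norm_sub_tendsto_zero.mpr (squeeze_zero' (.of_forall fun _ => norm_nonneg _)
    ?_ hrate)
  filter_upwards [eventually_gt_atTop 0] with N hN
  refine (trapezoidal_error_le_of_c2 hf hbound hN).trans_eq ?_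
  field

lemma trapezoidal_integral_of_eq_endpoints {f : ℝ → ℝ} {a b : ℝ} (hab : f a = f b) {N : ℕ}
    (hN : N ≠ 0) :
    trapezoidal_integral f N a b =
      (b - a) / N * ∑ k ∈ range N, f (a + (k + 1) * (b - a) / N) := by
  obtain ⟨m, rfl⟩ := Nat.exists_eq_succ_of_ne_zero hN
  have hlast : a + ((m : ℝ) + 1) * (b - a) / (m.succ : ℕ) = b := by
    push_cast
    field
  rw [trapezoidal_integral, sum_range_succ, hlast, hab, add_self_div_two, Nat.succ_sub_one,
    add_comm (f b)]

/-- The sum of the distances from `(a, c)` to the points `(±1, 0)`; its sublevel sets are confocal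
ellipses. -/
noncomputable def focalSum (a c : ℝ) : ℝ := √((a - 1) ^ 2 + c ^ 2) + √((a + 1) ^ 2 + c ^ 2)

lemma focalSum_pos (a c : ℝ) : 0 < focalSum a c := by
  have hleft : |a - 1| ≤ √((a - 1) ^ 2 + c ^ 2) := abs_le_sqrt (by linarith [sq_nonneg c])
  have hright : |a + 1| ≤ √((a + 1) ^ 2 + c ^ 2) := abs_le_sqrt (by linarith [sq_nonneg c])
  unfold focalSum
  linarith [neg_abs_le (a - 1), le_abs_self (a + 1)]

lemma four_mul_le_focalSum_sq (a c : ℝ) : 4 * (a ^ 2 + c ^ 2) ≤ focalSum a c ^ 2 := by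
  have hprod : a ^ 2 + c ^ 2 - 1 ≤ √((a - 1) ^ 2 + c ^ 2) * √((a + 1) ^ 2 + c ^ 2) := by
    rw [← sqrt_mul (by positivity)]
    exact le_sqrt_of_sq_le (by nlinarith [sq_nonneg c])
  rw [focalSum, add_sq, sq_sqrt (by positivity), sq_sqrt (by positivity)]
  linarith

lemma focalSum_sq_le (a c : ℝ) : focalSum a c ^ 2 ≤ 4 * (a ^ 2 + c ^ 2 + 1) := by
  refine add_sq_le.trans_eq ?_
  rw [sq_sqrt (by positivity), sq_sqrt (by positivity)]
  ring

lemma add_mul_sqrt_sub_sqrt_eq (R a c : ℝ) :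
    a + R / √2 * (√((a - 1) ^ 2 + c ^ 2) - √((a + 1) ^ 2 + c ^ 2)) =
      a * (focalSum a c - 2 * √2 * R) / focalSum a c := by
  have hdiff : (√((a - 1) ^ 2 + c ^ 2) - √((a + 1) ^ 2 + c ^ 2)) * focalSum a c = -4 * a := by
    rw [focalSum, mul_comm, ← sq_sub_sq, sq_sqrt (by positivity), sq_sqrt (by positivity)]
    ring
  have htwo : R / √2 = √2 / 2 * R := by rw [sqrt_div_self', one_div, div_eq_inv_mul]
  rw [eq_div_iff (focalSum_pos a c).ne', htwo]
  linear_combination (√2 / 2 * R) * hdiff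

lemma sStep_eq_ite (r n : ℕ) {x y : ℝ} (hxy : 0 < x + y) :
    sStep r n x y = if focalSum (x + y) ((r : ℝ) - n - 1) ≤ 2 * √2 * r then 1 else -1 := by
  have hsign : (x + y) * (focalSum (x + y) ((r : ℝ) - n - 1) - 2 * √2 * r) /
      focalSum (x + y) ((r : ℝ) - n - 1) ≤ 0 ↔ focalSum (x + y) ((r : ℝ) - n - 1) ≤ 2 * √2 * r := by
    rw [div_le_iff₀ (focalSum_pos _ _), zero_mul,
      ← mul_zero (x + y), mul_le_mul_iff_right₀ hxy, sub_nonpos]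
  simp only [sStep, sgn, add_mul_sqrt_sub_sqrt_eq, hsign]
  split_ifs <;> norm_num

lemma one_le_two_sub_sq {t : ℝ} (ht : |t| ≤ 1) : 1 ≤ 2 - t ^ 2 := by
  linarith [(sq_le_one_iff_abs_le_one t).mpr ht]

lemma two_sub_sq_pos {t : ℝ} (ht : t ∈ Set.uIcc (-1) 1) : 0 < 2 - t ^ 2 := by
  rw [Set.uIcc_of_le (by norm_num)] at ht
  exact zero_lt_one.trans_le (one_le_two_sub_sq (abs_le.mpr ht))

/-- The function `u - 1 / u`. At `u = aₙ / r` it is the `n`-th summand of `∑ aₙ / r - r ∑ 1 / aₙ`,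
and at `u = √(2 - t²)` it is the derivative of `t √(2 - t²) / 2`. -/
noncomputable def invGap (u : ℝ) : ℝ := u - 1 / u

lemma abs_invGap_sub_invGap_le {u v ε : ℝ} (hε : 0 < ε) (huv : ε ≤ u * v) :
    |invGap u - invGap v| ≤ (1 + 1 / ε) * |u - v| := by
  have hpos : 0 < u * v := hε.trans_le huv
  have hu : u ≠ 0 := left_ne_zero_of_mul hpos.ne'
  have hv : v ≠ 0 := right_ne_zero_of_mul hpos.ne'
  have hfactor : invGap u - invGap v = (1 + 1 / (u * v)) * (u - v) := by
    unfold invGap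
    field
  rw [hfactor, abs_mul, abs_of_pos (by positivity)]
  gcongr

/-- `(a, c)` lies at bounded distance from the right half of the circle of radius `√2 * R` about the
origin: the invariant maintained by the points `(aₙ, cₙ)` of the path. -/
structure NearCircle (R a c : ℝ) : Prop where
  sub_one_le : R - 1 ≤ a
  abs_defect_le : |a ^ 2 + c ^ 2 - 2 * R ^ 2| ≤ 6 * R

namespace NearCircle

variable {R a c : ℝ}

lemma le_two_mul (h : NearCircle R a c) (hR : 3 ≤ R) : a ≤ 2 * R := by
  refine le_of_sq_le_sq ?_ (by linarith)
  nlinarith [(abs_le.mp h.abs_defect_le).2, sq_nonneg c]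

lemma half_le (h : NearCircle R a c) (hR : 2 ≤ R) : R / 2 ≤ a := by linarith [h.sub_one_le]

lemma step_of_sq_add_sq_le (h : NearCircle R a c) (hR : 2 ≤ R) (hc : |c| ≤ R - 1)
    (hin : a ^ 2 + c ^ 2 ≤ 2 * R ^ 2) : NearCircle R (a + 1) (c - 1) := by
  obtain ⟨hlower, hdefect⟩ := h
  rw [abs_le] at hc hdefect
  have ha : a ≤ 3 / 2 * R := by nlinarith [sq_nonneg c]
  exact ⟨by linarith, abs_le.mpr ⟨by linarith, by linarith⟩⟩

lemma step_of_le_sq_add_sq (h : NearCircle R a c) (hR : 3 ≤ R) (hc : |c| ≤ R - 1)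
    (hout : 2 * R ^ 2 - 1 ≤ a ^ 2 + c ^ 2) : NearCircle R (a - 1) (c - 1) := by
  have hupper := h.le_two_mul hR
  have hcsq : c ^ 2 ≤ (R - 1) ^ 2 := sq_le_sq.mpr (hc.trans (le_abs_self _))
  obtain ⟨hlower, hdefect⟩ := h
  rw [abs_le] at hc hdefect
  have ha : R ≤ a := by nlinarith
  exact ⟨by linarith, abs_le.mpr ⟨by linarith, by linarith⟩⟩

lemma step (h : NearCircle R a c) (hR : 3 ≤ R) (hc : |c| ≤ R - 1) :
    NearCircle R (a + if focalSum a c ≤ 2 * √2 * R then 1 else -1) (c - 1) := by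
  have hsq : (2 * √2 * R) ^ 2 = 8 * R ^ 2 := by
    rw [mul_pow, mul_pow, sq_sqrt zero_le_two]
    norm_num
  split_ifs with hfocal
  · have hfocal_sq := pow_le_pow_left₀ (focalSum_pos a c).le hfocal 2
    exact h.step_of_sq_add_sq_le (by linarith) hc (by linarith [four_mul_le_focalSum_sq a c])
  · have hfocal_sq := pow_le_pow_left₀ (by positivity) (not_le.mp hfocal).le 2
    exact h.step_of_le_sq_add_sq hR hc (by linarith [focalSum_sq_le a c])

lemma abs_div_sub_sqrt_le (h : NearCircle R a c) (hR : 2 ≤ R) (hc : |c / R| ≤ 1) :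
    |a / R - √(2 - (c / R) ^ 2)| ≤ 6 / R := by
  have hRpos : 0 < R := by linarith
  have hv : 1 ≤ 2 - (c / R) ^ 2 := one_le_two_sub_sq hc
  have hsum : 1 ≤ a / R + √(2 - (c / R) ^ 2) :=
    le_add_of_nonneg_of_le (div_nonneg (by linarith [h.half_le hR]) hRpos.le) (one_le_sqrt.mpr hv)
  calc |a / R - √(2 - (c / R) ^ 2)|
      ≤ |a / R - √(2 - (c / R) ^ 2)| * (a / R + √(2 - (c / R) ^ 2)) :=
        le_mul_of_one_le_right (abs_nonneg _) hsum
    _ = |(a / R) ^ 2 - √(2 - (c / R) ^ 2) ^ 2| := by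
        rw [sq_sub_sq, abs_mul, abs_of_nonneg (zero_le_one.trans hsum), mul_comm]
    _ = |a ^ 2 + c ^ 2 - 2 * R ^ 2| / R ^ 2 := by
        rw [sq_sqrt (zero_le_one.trans hv), ← abs_of_pos (pow_pos hRpos 2), ← abs_div, abs_sq]
        congr 1
        field
    _ ≤ 6 * R / R ^ 2 := by gcongr; exact h.abs_defect_le
    _ = 6 / R := by field

lemma abs_invGap_div_sub_le (h : NearCircle R a c) (hR : 2 ≤ R) (hc : |c / R| ≤ 1) :
    |invGap (a / R) - invGap √(2 - (c / R) ^ 2)| ≤ 18 / R := by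
  have hu : 1 / 2 ≤ a / R := by
    rw [le_div_iff₀ (by linarith)]
    linarith [h.half_le hR]
  have hv : 1 ≤ √(2 - (c / R) ^ 2) := one_le_sqrt.mpr (one_le_two_sub_sq hc)
  have hprod : 1 / 2 ≤ a / R * √(2 - (c / R) ^ 2) :=
    hu.trans (le_mul_of_one_le_right (one_half_pos.le.trans hu) hv)
  calc |invGap (a / R) - invGap √(2 - (c / R) ^ 2)|
      ≤ (1 + 1 / (1 / 2)) * |a / R - √(2 - (c / R) ^ 2)| :=
        abs_invGap_sub_invGap_le one_half_pos hprod
    _ ≤ (1 + 1 / (1 / 2)) * (6 / R) := by gcongr; exact h.abs_div_sub_sqrt_le hR hc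
    _ = 18 / R := by ring

end NearCircle

/-- The coordinate sum `aₙ = xₙ + yₙ` along the signum circle path of radius `r`, which is the
Manhattan distance of its `n`-th point from the origin. -/
noncomputable def manhattan (r n : ℕ) : ℝ := (circlePath r n).1 + (circlePath r n).2

lemma manhattan_succ (r n : ℕ) : manhattan r (n + 1) = manhattan r n + sTerm r n := by
  simp only [manhattan, circlePath, sTerm]
  ring

lemma nearCircle_manhattan {r n : ℕ} (hr : 3 ≤ r) (hn : n < 2 * r) :
    NearCircle r (manhattan r n) ((r : ℝ) - n - 1) := by
  have hr' : (3 : ℝ) ≤ r := by exact_mod_cast hr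
  induction n with
  | zero =>
    simp only [manhattan, circlePath, Nat.cast_zero, sub_zero, add_zero]
    exact ⟨by linarith, abs_le.mpr ⟨by linarith, by linarith⟩⟩
  | succ n ih =>
    have h := ih (by omega)
    have hn' : (n : ℝ) + 2 ≤ 2 * r := by exact_mod_cast hn
    have hc : |(r : ℝ) - n - 1| ≤ r - 1 :=
      abs_le.mpr ⟨by linarith, by linarith [n.cast_nonneg (α := ℝ)]⟩
    have hpos : 0 < manhattan r n := by linarith [h.sub_one_le]
    rw [manhattan_succ, sTerm, sStep_eq_ite r n hpos, Nat.cast_succ, ← sub_sub (r : ℝ)]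
    exact h.step hr' hc

lemma sq_le_sum_manhattan {r : ℕ} (hr : 3 ≤ r) :
    (r : ℝ) ^ 2 ≤ ∑ n ∈ range (2 * r), manhattan r n := by
  have hr' : (2 : ℝ) ≤ r := by exact_mod_cast (by omega : 2 ≤ r)
  calc (r : ℝ) ^ 2 = ∑ _ ∈ range (2 * r), (r : ℝ) / 2 := by
        rw [sum_const, card_range, nsmul_eq_mul]
        push_cast
        ring
    _ ≤ ∑ n ∈ range (2 * r), manhattan r n :=
        sum_le_sum fun n hn => (nearCircle_manhattan hr (mem_range.mp hn)).half_le hr'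

lemma isBoundedUnder_sq_div_sum_manhattan :
    IsBoundedUnder (· ≤ ·) atTop
      ((‖·‖) ∘ fun r : ℕ => (r : ℝ) ^ 2 / ∑ n ∈ range (2 * r), manhattan r n) := by
  refine isBoundedUnder_of_eventually_le (a := 1) ((eventually_ge_atTop 3).mono fun r hr => ?_)
  have hsum := sq_le_sum_manhattan hr
  have hsum_nonneg := (sq_nonneg (r : ℝ)).trans hsum
  rw [Function.comp_apply, norm_of_nonneg (by positivity)]
  exact div_le_one_of_le₀ hsum hsum_nonneg

lemma hasDerivAt_mul_sqrt_two_sub_sq {t : ℝ} (ht : 0 < 2 - t ^ 2) :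
    HasDerivAt (fun t : ℝ => t * √(2 - t ^ 2) / 2) (invGap √(2 - t ^ 2)) t := by
  have hinner : HasDerivAt (fun t : ℝ => 2 - t ^ 2) (-(2 * t)) t := by
    simpa using (hasDerivAt_pow 2 t).const_sub 2
  have hsqrt : √(2 - t ^ 2) ≠ 0 := (sqrt_pos.mpr ht).ne'
  refine (((hasDerivAt_id' t).mul (hinner.sqrt ht.ne')).div_const 2).congr_deriv ?_
  rw [invGap]
  field_simp
  rw [sq_sqrt ht.le]
  ring

lemma contDiffOn_invGap_sqrt_two_sub_sq {k : WithTop ℕ∞} :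
    ContDiffOn ℝ k (fun t : ℝ => invGap √(2 - t ^ 2)) (Set.uIcc (-1) 1) := by
  have hsqrt : ContDiffOn ℝ k (fun t : ℝ => √(2 - t ^ 2)) (Set.uIcc (-1) 1) :=
    ContDiffOn.sqrt (by fun_prop) fun _ ht => (two_sub_sq_pos ht).ne'
  exact hsqrt.sub (contDiffOn_const.div hsqrt fun _ ht => (sqrt_pos.mpr (two_sub_sq_pos ht)).ne')

lemma integral_invGap_sqrt_two_sub_sq : ∫ t in (-1 : ℝ)..1, invGap √(2 - t ^ 2) = 1 := by
  rw [intervalIntegral.integral_eq_sub_of_hasDerivAt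
    (fun _ ht => hasDerivAt_mul_sqrt_two_sub_sq (two_sub_sq_pos ht))
    (contDiffOn_invGap_sqrt_two_sub_sq (k := 0)).continuousOn.intervalIntegrable]
  norm_num

lemma tendsto_mean_invGap_sqrt :
    Tendsto (fun r : ℕ => (∑ n ∈ range (2 * r), invGap √(2 - (((r : ℝ) - n - 1) / r) ^ 2)) / r)
      atTop (nhds 1) := by
  have htwo : Tendsto (fun r : ℕ => 2 * r) atTop atTop := tendsto_id.const_mul_atTop' two_pos
  have htrap := (tendsto_trapezoidal_integral contDiffOn_invGap_sqrt_two_sub_sq).comp htwo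
  rw [integral_invGap_sqrt_two_sub_sq] at htrap
  refine htrap.congr' ?_
  filter_upwards [eventually_gt_atTop 0] with r hr
  rw [Function.comp_apply, trapezoidal_integral_of_eq_endpoints (by norm_num) (by omega), mul_sum,
    sum_div]
  refine sum_congr rfl fun n _ => ?_
  -- The nodes run against `cₙ / r`, which is harmless because the integrand is even.
  have hnode : (-1 + ((n : ℝ) + 1) * (1 - -1) / (2 * r : ℕ)) ^ 2 = (((r : ℝ) - n - 1) / r) ^ 2 := by
    push_cast
    field
  rw [hnode]
  push_cast
  field

lemma sum_manhattan_sub_sum_inv_eq {r : ℕ} (hr : r ≠ 0) :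
    (∑ n ∈ range (2 * r), manhattan r n) / (r : ℝ) ^ 2 - ∑ n ∈ range (2 * r), 1 / manhattan r n =
      (∑ n ∈ range (2 * r), invGap (manhattan r n / r)) / r := by
  have hr' : (r : ℝ) ≠ 0 := by exact_mod_cast hr
  rw [sum_div, sum_div, ← sum_sub_distrib]
  refine sum_congr rfl fun n _ => ?_
  rw [invGap, one_div_div]
  field

lemma abs_mean_invGap_sub_le {r : ℕ} (hr : 3 ≤ r) :
    |(∑ n ∈ range (2 * r), invGap (manhattan r n / r)) / r -
      (∑ n ∈ range (2 * r), invGap √(2 - (((r : ℝ) - n - 1) / r) ^ 2)) / r| ≤ 36 / r := by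
  have hr' : (2 : ℝ) ≤ r := by exact_mod_cast (by omega : 2 ≤ r)
  have hrpos : (0 : ℝ) < r := by linarith
  have hterm : ∀ n ∈ range (2 * r), |invGap (manhattan r n / r) -
      invGap √(2 - (((r : ℝ) - n - 1) / r) ^ 2)| ≤ 18 / r := by
    intro n hn
    have hn' : (n : ℝ) + 1 ≤ 2 * r := by exact_mod_cast mem_range.mp hn
    have ht : |((r : ℝ) - n - 1) / r| ≤ 1 := by
      rw [abs_div, abs_of_pos hrpos, div_le_one hrpos, abs_le]
      exact ⟨by linarith, by linarith [n.cast_nonneg (α := ℝ)]⟩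
    exact (nearCircle_manhattan hr (mem_range.mp hn)).abs_invGap_div_sub_le hr' ht
  rw [← sub_div, ← sum_sub_distrib, abs_div, abs_of_pos hrpos]
  gcongr
  calc _ ≤ ∑ _ ∈ range (2 * r), (18 : ℝ) / r := (abs_sum_le_sum_abs _ _).trans (sum_le_sum hterm)
    _ = 36 := by
      rw [sum_const, card_range, nsmul_eq_mul]
      push_cast
      field

lemma tendsto_sum_manhattan_sub_sum_inv :
    Tendsto (fun r : ℕ => (∑ n ∈ range (2 * r), manhattan r n) / (r : ℝ) ^ 2 -
      ∑ n ∈ range (2 * r), 1 / manhattan r n) atTop (nhds 1) := by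
  have herror : Tendsto (fun r : ℕ => (∑ n ∈ range (2 * r), invGap (manhattan r n / r)) / r -
      (∑ n ∈ range (2 * r), invGap √(2 - (((r : ℝ) - n - 1) / r) ^ 2)) / r) atTop (nhds 0) :=
    squeeze_zero_norm' ((eventually_ge_atTop 3).mono fun _ => abs_mean_invGap_sub_le)
      (tendsto_const_div_atTop_nhds_zero_nat 36)
  have hlimit := herror.add tendsto_mean_invGap_sqrt
  simp only [sub_add_cancel, zero_add] at hlimit
  exact hlimit.congr' ((eventually_ne_atTop 0).mono fun _ hr =>
    (sum_manhattan_sub_sum_inv_eq hr).symm)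

/-- with `A(r) = 2·∑_{n=0}^{2r-1} 1/aₙ` the arithmetic mean and
`H(r) = 8r²/∑_{n=0}^{2r-1} aₙ` the harmonic mean of the values `πₙ = 4r/aₙ`
along the signum circle path of radius `r`, where `aₙ = xₙ + yₙ`, the sequence
`A(r)·H(r) + 2·H(r) - 16` converges to `0` as `r → ∞`. -/
theorem arithmetic_harmonic_mean_identity :
    Filter.Tendsto (fun r : ℕ =>
      (2 * ∑ n ∈ Finset.range (2 * r),
          1 / ((circlePath r n).1 + (circlePath r n).2)) *
        (8 * (r : ℝ) ^ 2 / ∑ n ∈ Finset.range (2 * r),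
          ((circlePath r n).1 + (circlePath r n).2)) +
      2 * (8 * (r : ℝ) ^ 2 / ∑ n ∈ Finset.range (2 * r),
          ((circlePath r n).1 + (circlePath r n).2)) - 16)
      Filter.atTop (nhds 0) := by
  have hzero := (tendsto_sum_manhattan_sub_sum_inv.sub_const 1).const_mul (-16)
  rw [sub_self, mul_zero] at hzero
  refine (hzero.zero_mul_isBoundedUnder_le isBoundedUnder_sq_div_sum_manhattan).congr' ?_
  filter_upwards [eventually_ge_atTop 3] with r hr
  have hr' : (r : ℝ) ≠ 0 := by exact_mod_cast (by omega : r ≠ 0)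
  have hsum : ∑ n ∈ range (2 * r), manhattan r n ≠ 0 :=
    ((pow_pos (by positivity) 2).trans_le (sq_le_sum_manhattan hr)).ne'
  unfold manhattan at hsum ⊢
  field
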